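/- Let N ≥ 3 be an integer and let K ⊆ ℤ/Nℤ be sos-valid, i.e., there exists a finite family of functions h_i : ℤ/Nℤ → ℂ, each supported on K, such that cos(π/N) − cos((2j+1)π/N) = Σ_i |h_i(j)|² for all j ∈ ℤ/Nℤ. Then |K| ≥ ln(N/2). -/

import Mathlib

/-!
Write `u = exp(iπ/N)` and `e_k(j) = exp(2πi·kj/N)`. The facet function is
`cos(π/N)·e_0 − (u·e_1 + u⁻¹·e_{-1})/2`.

Suppose the pairs of elements of `K` at cyclic distance at most some `γ ≥ 1` form an equivalence
relation on `K`, and `3γ < N`. Let `L` be the linear functional on functions `ℤ/Nℤ → ℂ` with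
`L(e_k) = u^{-k̄}` when the least absolute residue `k̄` of `k` satisfies `|k̄| ≤ γ`, and `L(e_k) = 0`
otherwise. Within a class the residues are additive because `3γ < N`, so `L(|h|²)` is a sum over
classes of squared moduli, hence nonnegative, for every `h` supported on `K`. But `L` takes the
facet function to `cos(π/N) − 1 < 0` (it acts as evaluation at the angle `0`, halfway between two
adjacent vertices), so `K` is not sos-valid (`not_sosValid_of_clusters`).

Such a `γ` with `γ ≤ 2^(|K|-1)` always exists (`exists_clustering`): starting from singletons and
`γ = 1`, merge two clusters at distance at most `γ` and double `γ`. The sum of the diameters of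
the clusters stays at most `γ`, so that when no merge is possible the clusters are exactly the
classes. At most `|K| - 1` merges occur. If `exp |K| < N/2` then `3·2^(|K|-1) < N` for nonempty
`K` (for empty `K` the condition `3γ < N` is not needed), and the two parts are contradictory.
-/

open Real Finset

/-- The cyclic distance on `ℤ/Nℤ`: `d(a,b) = min{|m| : m ∈ ℤ, m ≡ a − b (mod N)}`. -/
def cycDist (N : ℕ) (a b : ZMod N) : ℕ := min (a - b).val (b - a).val

/-- `C ⊆ ℤ/Nℤ` has in-diameter at most `γ` if it is contained in an interval
`{x, x+1, …, x+γ}`. -/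
def HasInDiamLE (N γ : ℕ) (C : Finset (ZMod N)) : Prop :=
  ∃ x : ZMod N, ∀ c ∈ C, ∃ t : ℕ, t ≤ γ ∧ c = x + (t : ZMod N)

/-- The pure frequency `e_k : ℤ/Nℤ → ℂ`, `e_k(j) = exp(2πi·kj/N)`. -/
noncomputable def freq (N : ℕ) (k j : ZMod N) : ℂ :=
  Complex.exp (2 * Real.pi * Complex.I * (k.val : ℂ) * (j.val : ℂ) / N)

/-- `h : ℤ/Nℤ → ℂ` is supported on `K` if it is a `ℂ`-linear combination of the
pure frequencies `e_k`, `k ∈ K`. -/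
def SupportedOn (N : ℕ) (K : Finset (ZMod N)) (h : ZMod N → ℂ) : Prop :=
  ∃ c : ZMod N → ℂ, h = fun j => ∑ k ∈ K, c k * freq N k j

/-- `K ⊆ ℤ/Nℤ` is sos-valid if the facet function `cos(π/N) − cos((2j+1)π/N)` of the
regular `N`-gon is a finite sum of squared moduli of functions supported on `K`. -/
def SosValid (N : ℕ) (K : Finset (ZMod N)) : Prop :=
  ∃ (m : ℕ) (h : Fin m → ZMod N → ℂ), (∀ i, SupportedOn N K (h i)) ∧
    ∀ j : ZMod N,
      Real.cos (π / N) - Real.cos ((2 * (j.val : ℝ) + 1) * π / N) =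
        ∑ i, Complex.normSq (h i j)

/-! ### Clustering a finite metric space -/

/-- Greedy clustering. `f` labels the current clusters, `D` bounds their diameters, and `γ` bounds
the sum of the diameters; at most `m` merges remain, each of which doubles `γ`. -/
lemma exists_clustering {α : Type*} [DecidableEq α] (d : α → α → ℕ)
    (hsymm : ∀ x y, d x y = d y x) (htri : ∀ x y z, d x z ≤ d x y + d y z) (K : Finset α) (m : ℕ) :
    ∀ (f : α → α) (D : α → ℕ) (γ : ℕ), (K.image f).card ≤ m + 1 →
      (∀ x ∈ K, ∀ y ∈ K, f x = f y → d x y ≤ D (f x)) → ∑ l ∈ K.image f, D l ≤ γ →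
      ∃ (γ' : ℕ) (f' : α → α), γ ≤ γ' ∧ γ' ≤ 2 ^ m * γ ∧
        ∀ x ∈ K, ∀ y ∈ K, (d x y ≤ γ' ↔ f' x = f' y) := by
  induction m with
  | zero =>
    intro f D γ hc hD hS
    refine ⟨γ, f, le_rfl, by simp, fun x hx y hy => ?_⟩
    have hxy : f x = f y := Finset.card_le_one.mp hc _ (mem_image_of_mem f hx) _
      (mem_image_of_mem f hy)
    refine ⟨fun _ => hxy, fun _ => (hD x hx y hy hxy).trans (le_trans ?_ hS)⟩
    exact Finset.single_le_sum (fun _ _ => Nat.zero_le _) (mem_image_of_mem f hx)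
  | succ m ih =>
    intro f D γ hc hD hS
    by_cases hex : ∃ x ∈ K, ∃ y ∈ K, f x ≠ f y ∧ d x y ≤ γ
    · obtain ⟨x, hx, y, hy, hne, hd⟩ := hex
      have hfx := mem_image_of_mem f hx
      have hfy := mem_image_of_mem f hy
      set f' : α → α := fun z => if f z = f y then f x else f z with hf'
      set D' : α → ℕ := Function.update D (f x) (D (f x) + D (f y) + γ) with hD'
      have hsub : K.image f' ⊆ (K.image f).erase (f y) := by
        intro l hl
        obtain ⟨z, hz, rfl⟩ := mem_image.mp hl
        by_cases h : f z = f y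
        · simp only [hf', h, if_true]
          exact mem_erase.mpr ⟨hne, hfx⟩
        · simp only [hf', h, if_false]
          exact mem_erase.mpr ⟨h, mem_image_of_mem f hz⟩
      have hcard : (K.image f').card ≤ m + 1 := by
        have := card_le_card hsub
        rw [card_erase_of_mem hfy] at this
        omega
      have hsum : ∑ l ∈ K.image f', D' l ≤ 2 * γ := by
        refine (Finset.sum_le_sum_of_subset hsub).trans ?_
        have hmem : f x ∈ (K.image f).erase (f y) := mem_erase.mpr ⟨hne, hfx⟩
        have h1 := Finset.add_sum_erase _ D hfy
        have h2 := Finset.add_sum_erase _ D hmem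
        have h3 := Finset.add_sum_erase _ D' hmem
        have h4 : ∑ l ∈ ((K.image f).erase (f y)).erase (f x), D' l =
            ∑ l ∈ ((K.image f).erase (f y)).erase (f x), D l :=
          Finset.sum_congr rfl fun l hl => by
            simp [hD', Function.update_of_ne (mem_erase.mp hl).1]
        have h5 : D' (f x) = D (f x) + D (f y) + γ := by simp [hD']
        omega
      have hdiam : ∀ a ∈ K, ∀ b ∈ K, f' a = f' b → d a b ≤ D' (f' a) := by
        -- distances between the two merged clusters pass through the pair `x`, `y`
        have cross : ∀ a ∈ K, ∀ b ∈ K, f a = f x → f b = f y →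
            d a b ≤ D (f x) + D (f y) + γ := by
          intro a ha b hb h1 h2
          have e1 := hD a ha x hx h1
          have e2 := hD y hy b hb h2.symm
          have e3 := htri a x b
          have e4 := htri x y b
          rw [h1] at e1
          omega
        intro a ha b hb hab
        by_cases h1 : f a = f y <;> by_cases h2 : f b = f y
        · have := hD a ha b hb (h1.trans h2.symm)
          rw [h1] at this
          simp only [hf', hD', h1, if_true, Function.update_self]
          omega
        · have hb' : f b = f x := by
            simp only [hf', h1, h2, if_true, if_false] at hab
            exact hab.symm
          have := cross b hb a ha hb' h1
          simp only [hf', hD', h1, if_true, Function.update_self]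
          rwa [hsymm]
        · have ha' : f a = f x := by simpa [hf', h1, h2] using hab
          have := cross a ha b hb ha' h2
          simp only [hf', hD', h1, if_false]
          rwa [ha', Function.update_self]
        · have hab' : f a = f b := by simpa [hf', h1, h2] using hab
          have := hD a ha b hb hab'
          simp only [hf', hD', h1, if_false]
          by_cases h3 : f a = f x
          · rw [h3, Function.update_self]
            rw [h3] at this
            omega
          · rwa [Function.update_of_ne h3]
      obtain ⟨γ', g, h1, h2, h3⟩ := ih f' D' (2 * γ) hcard hdiam hsum
      exact ⟨γ', g, by omega, by rw [pow_succ]; linarith, h3⟩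
    · push Not at hex
      refine ⟨γ, f, le_rfl, Nat.le_mul_of_pos_left _ (by positivity), fun x hx y hy => ?_⟩
      refine ⟨fun h => ?_, fun h => (hD x hx y hy h).trans (le_trans ?_ hS)⟩
      · by_contra hne
        exact absurd (hex x hx y hy hne) (by omega)
      · exact Finset.single_le_sum (fun _ _ => Nat.zero_le _) (mem_image_of_mem f hx)

/-! ### Fourier analysis on `ℤ/Nℤ` and the separating functional -/

lemma freq_eq_stdAddChar (N : ℕ) [NeZero N] (k j : ZMod N) :
    freq N k j = ZMod.stdAddChar (k * j) := by
  have h : k * j = (((k.val * j.val : ℕ) : ℤ) : ZMod N) := by simp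
  rw [h, ZMod.stdAddChar_coe, freq]
  congr 1
  push_cast
  ring

/-- A linear functional on functions `ℤ/Nℤ → ℂ` may be prescribed on the characters. -/
lemma exists_weights (N : ℕ) [NeZero N] (g : ZMod N → ℂ) :
    ∃ W : ZMod N → ℂ, ∀ k, ∑ j, ZMod.stdAddChar (k * j) * W j = g k := by
  have hN : (N : ℂ) ≠ 0 := Nat.cast_ne_zero.mpr (NeZero.ne N)
  refine ⟨fun j => (N : ℂ)⁻¹ * ∑ l, g l * ZMod.stdAddChar (-(l * j)), fun k => ?_⟩
  have h1 : ∀ j : ZMod N, ZMod.stdAddChar (k * j) *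
      ((N : ℂ)⁻¹ * ∑ l, g l * ZMod.stdAddChar (-(l * j))) =
      ∑ l, (N : ℂ)⁻¹ * g l * ZMod.stdAddChar (j * (k - l)) := by
    intro j
    rw [Finset.mul_sum, Finset.mul_sum]
    refine Finset.sum_congr rfl fun l _ => ?_
    rw [show j * (k - l) = k * j + -(l * j) by ring, AddChar.map_add_eq_mul]
    ring
  simp_rw [h1]
  rw [Finset.sum_comm]
  simp_rw [← Finset.mul_sum, AddChar.sum_mulShift _ (ZMod.isPrimitive_stdAddChar N), sub_eq_zero]
  simp only [ZMod.card, Nat.cast_ite, Nat.cast_zero, mul_ite, mul_zero]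
  rw [Finset.sum_ite_eq Finset.univ k]
  simp only [Finset.mem_univ, if_true]
  field_simp

/-- Least absolute residues subtract without wrap-around as long as they are at most `γ < N/3`. -/
lemma valMinAbs_sub_of_le (N γ : ℕ) [NeZero N] (hγ : 3 * γ < N) (x y r : ZMod N)
    (hx : (x - r).valMinAbs.natAbs ≤ γ) (hy : (y - r).valMinAbs.natAbs ≤ γ)
    (hxy : (x - y).valMinAbs.natAbs ≤ γ) :
    (x - y).valMinAbs = (x - r).valMinAbs - (y - r).valMinAbs := by
  have h : (((x - y).valMinAbs - ((x - r).valMinAbs - (y - r).valMinAbs) : ℤ) : ZMod N) = 0 := by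
    push_cast [ZMod.coe_valMinAbs]
    ring
  rw [ZMod.intCast_zmod_eq_zero_iff_dvd] at h
  have := Int.eq_zero_of_abs_lt_dvd h (by rw [abs_lt]; omega)
  omega

/-- A matrix that vanishes between different labels and is the same rank-one form `φ φ*` within each
label defines a positive semidefinite Hermitian form. -/
lemma psd_of_label {α : Type*} [DecidableEq α] (K : Finset α) (f : α → α) (G : α → α → ℂ)
    (φ : α → ℂ)
    (hG : ∀ k ∈ K, ∀ l ∈ K, G k l = if f k = f l then φ k * starRingEnd ℂ (φ l) else 0)
    (c : α → ℂ) :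
    ∃ r : ℝ, 0 ≤ r ∧ ∑ k ∈ K, ∑ l ∈ K, c k * starRingEnd ℂ (c l) * G k l = (r : ℂ) := by
  refine ⟨∑ t ∈ K.image f, Complex.normSq (∑ k ∈ K, if f k = t then c k * φ k else 0),
    Finset.sum_nonneg fun _ _ => Complex.normSq_nonneg _, ?_⟩
  push_cast
  simp_rw [← Complex.mul_conj, map_sum, Finset.sum_mul_sum]
  conv_rhs => rw [Finset.sum_comm]
  refine Finset.sum_congr rfl fun k hk => ?_
  conv_rhs => rw [Finset.sum_comm]
  refine Finset.sum_congr rfl fun l hl => ?_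
  rw [Finset.sum_eq_single_of_mem (f k) (mem_image_of_mem f hk)
    (fun t _ ht => by rw [if_neg (Ne.symm ht), zero_mul]), hG k hk l hl]
  by_cases h : f k = f l
  · simp only [h, if_true, map_mul]
    ring
  · simp [h, Ne.symm h]

/-- A set whose elements fall into clusters of diameter at most `γ`, pairwise more than `γ` apart,
is not sos-valid. -/
lemma not_sosValid_of_clusters (N : ℕ) (hN : 3 ≤ N) (K : Finset (ZMod N)) (γ : ℕ) (hγ1 : 1 ≤ γ)
    (hγ : K.Nonempty → 3 * γ < N) (f : ZMod N → ZMod N)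
    (hf : ∀ x ∈ K, ∀ y ∈ K, ((x - y).valMinAbs.natAbs ≤ γ ↔ f x = f y)) :
    ¬ SosValid N K := by
  have : NeZero N := ⟨by omega⟩
  have : Fact (1 < N) := ⟨by omega⟩
  rintro ⟨m, h, hsupp, hsos⟩
  set u : ℂ := Complex.exp (π / N * Complex.I) with hu
  have hu0 : u ≠ 0 := Complex.exp_ne_zero _
  have hconj : starRingEnd ℂ u = u⁻¹ := by
    rw [hu, ← Complex.exp_conj, ← Complex.exp_neg]
    congr 1
    simp
  set g : ZMod N → ℂ := fun k => if k.valMinAbs.natAbs ≤ γ then u ^ (-k.valMinAbs) else 0 with hg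
  obtain ⟨W, hW⟩ := exists_weights N g
  have v1 : (1 : ZMod N).valMinAbs = 1 := by
    have := ZMod.valMinAbs_natCast_of_le_half (n := N) (a := 1) (by omega)
    simpa using this
  have vm1 : (-1 : ZMod N).valMinAbs = -1 := by
    rw [ZMod.valMinAbs_neg_of_ne_half, v1]
    rw [ZMod.val_one]
    omega
  have g0 : g 0 = 1 := by simp [hg]
  have g1 : g 1 = u⁻¹ := by simp [hg, v1, hγ1]
  have gm1 : g (-1) = u := by simp [hg, vm1, hγ1]
  -- the functional is negative on the facet function
  have hleft : ∑ j : ZMod N,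
      ((Real.cos (π / N) - Real.cos ((2 * (j.val : ℝ) + 1) * π / N) : ℝ) : ℂ) * W j =
      ((Real.cos (π / N) - 1 : ℝ) : ℂ) := by
    have e : ∀ j : ZMod N,
        ((Real.cos (π / N) - Real.cos ((2 * (j.val : ℝ) + 1) * π / N) : ℝ) : ℂ) * W j =
        (Real.cos (π / N) : ℂ) * (ZMod.stdAddChar (0 * j) * W j)
          - u / 2 * (ZMod.stdAddChar (1 * j) * W j)
          - u⁻¹ / 2 * (ZMod.stdAddChar (-1 * j) * W j) := by
      intro j
      have e1 : (ZMod.stdAddChar (1 * j) : ℂ) = Complex.exp (2 * π * Complex.I * j.val / N) := by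
        rw [← freq_eq_stdAddChar, freq, ZMod.val_one]
        simp
      have e2 : (ZMod.stdAddChar (-1 * j) : ℂ) =
          Complex.exp (-(2 * π * Complex.I * j.val / N)) := by
        rw [neg_mul, AddChar.map_neg_eq_inv, e1, Complex.exp_neg]
      have e3 : (ZMod.stdAddChar (0 * j) : ℂ) = 1 := by simp
      have e4 : ((Real.cos ((2 * (j.val : ℝ) + 1) * π / N) : ℝ) : ℂ) =
          u / 2 * Complex.exp (2 * π * Complex.I * j.val / N) +
          u⁻¹ / 2 * Complex.exp (-(2 * π * Complex.I * j.val / N)) := by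
        rw [hu, ← Complex.exp_neg, Complex.ofReal_cos, Complex.cos, div_mul_eq_mul_div (Complex.exp _),
          div_mul_eq_mul_div (Complex.exp _), ← Complex.exp_add, ← Complex.exp_add, ← add_div]
        congr 3 <;> push_cast <;> ring
      rw [e1, e2, e3, Complex.ofReal_sub, e4]
      ring
    simp_rw [e]
    rw [Finset.sum_sub_distrib, Finset.sum_sub_distrib, ← Finset.mul_sum, ← Finset.mul_sum,
      ← Finset.mul_sum, hW, hW, hW, g0, g1, gm1]
    push_cast
    field_simp
    ring
  -- the functional is nonnegative on each squared modulus
  have hpsd : ∀ i, ∃ r : ℝ, 0 ≤ r ∧ ∑ j, (Complex.normSq (h i j) : ℂ) * W j = r := by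
    intro i
    obtain ⟨c, hc⟩ := hsupp i
    set s : ZMod N → ZMod N := fun k => Function.invFunOn f K (f k) with hs
    have hsK : ∀ k ∈ K, s k ∈ K ∧ f (s k) = f k := fun k hk =>
      ⟨Function.invFunOn_mem ⟨k, hk, rfl⟩, Function.invFunOn_eq ⟨k, hk, rfl⟩⟩
    obtain ⟨r, hr, hr'⟩ := psd_of_label K f (fun k l => g (k - l))
      (fun k => u ^ (-(k - s k).valMinAbs)) (by
        intro k hk l hl
        simp only [hg, hf k hk l hl]
        split_ifs with hkl
        · have hsl : s l = s k := by simp only [hs, hkl]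
          rw [valMinAbs_sub_of_le N γ (hγ ⟨k, hk⟩) k l (s k)
            ((hf k hk _ (hsK k hk).1).2 (hsK k hk).2.symm)
            ((hf l hl _ (hsK k hk).1).2 (hkl.symm.trans (hsK k hk).2.symm))
            ((hf k hk l hl).2 hkl), hsl, map_zpow₀, hconj, inv_zpow', ← zpow_add₀ hu0]
          congr 1
          ring
        · rfl) c
    refine ⟨r, hr, ?_⟩
    rw [← hr']
    have e : ∀ j : ZMod N, (Complex.normSq (h i j) : ℂ) * W j =
        ∑ k ∈ K, ∑ l ∈ K, c k * starRingEnd ℂ (c l) *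
          (ZMod.stdAddChar ((k - l) * j) * W j) := by
      intro j
      rw [← Complex.mul_conj, hc]
      simp only [map_sum, map_mul]
      rw [Finset.sum_mul_sum]
      simp only [Finset.sum_mul]
      refine Finset.sum_congr rfl fun k _ => Finset.sum_congr rfl fun l _ => ?_
      rw [freq_eq_stdAddChar, freq_eq_stdAddChar, ← AddChar.map_neg_eq_conj,
        show (k - l) * j = k * j + -(l * j) by ring, AddChar.map_add_eq_mul]
      ring
    simp_rw [e]
    rw [Finset.sum_comm]
    refine Finset.sum_congr rfl fun k _ => ?_
    rw [Finset.sum_comm]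
    refine Finset.sum_congr rfl fun l _ => ?_
    rw [← Finset.mul_sum, hW]
  choose r hr hr' using hpsd
  have hright : ∑ j : ZMod N,
      ((Real.cos (π / N) - Real.cos ((2 * (j.val : ℝ) + 1) * π / N) : ℝ) : ℂ) * W j =
      ((∑ i, r i : ℝ) : ℂ) := by
    simp_rw [hsos]
    push_cast
    simp_rw [Finset.sum_mul]
    rw [Finset.sum_comm]
    exact Finset.sum_congr rfl fun i _ => hr' i
  rw [hleft] at hright
  have hEq : Real.cos (π / N) - 1 = ∑ i, r i := by exact_mod_cast hright
  have hnn : 0 ≤ ∑ i, r i := Finset.sum_nonneg fun i _ => hr i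
  have hN' : (3 : ℝ) ≤ N := by exact_mod_cast hN
  have hlt : Real.cos (π / N) < Real.cos 0 := by
    refine Real.cos_lt_cos_of_nonneg_of_le_pi le_rfl ?_ (by positivity)
    exact div_le_self Real.pi_pos.le (by linarith)
  rw [Real.cos_zero] at hlt
  linarith

/-! ### The lower bound -/

/-- Any sos-valid set of frequencies for the regular `N`-gon has at least `ln(N/2)`
elements. -/
theorem sosValid_card_lb (N : ℕ) (hN : 3 ≤ N) (K : Finset (ZMod N))
    (hK : SosValid N K) : Real.log (N / 2) ≤ (K.card : ℝ) := by
  have : NeZero N := ⟨by omega⟩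
  by_contra hlt
  push Not at hlt
  have hN' : (3 : ℝ) ≤ N := by exact_mod_cast hN
  have hexp : Real.exp K.card < N / 2 := (Real.lt_log_iff_exp_lt (by linarith)).mp hlt
  obtain ⟨γ, f, h1, h2, h3⟩ := exists_clustering
    (fun x y : ZMod N => (x - y).valMinAbs.natAbs)
    (fun x y => by rw [← ZMod.natAbs_valMinAbs_neg, neg_sub])
    (fun x y z => by
      have := ZMod.natAbs_valMinAbs_add_le (x - y) (y - z)
      have h := Int.natAbs_add_le (x - y).valMinAbs (y - z).valMinAbs
      rw [sub_add_sub_cancel] at this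
      exact this.trans h)
    K (K.card - 1) id (fun _ => 0) 1 (by rw [image_id]; omega)
    (fun x _ y _ hxy => by
      simp only [id] at hxy
      simp [hxy]) (by simp)
  refine not_sosValid_of_clusters N hN K γ h1 (fun hne => ?_) f h3 hK
  have hpos : 0 < K.card := hne.card_pos
  obtain ⟨n, hn⟩ : ∃ n, K.card = n + 1 := ⟨K.card - 1, by omega⟩
  rw [hn] at h2 hexp
  simp only [Nat.add_sub_cancel, mul_one] at h2
  have h2' : (γ : ℝ) ≤ 2 ^ n := by exact_mod_cast h2
  have he : (2 : ℝ) ^ (n + 1) ≤ Real.exp ((n + 1 : ℕ) : ℝ) := by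
    rw [← Real.exp_one_pow]
    exact pow_le_pow_left₀ (by norm_num) (by linarith [Real.exp_one_gt_d9]) _
  have hp : (0 : ℝ) < 2 ^ n := by positivity
  have : (3 * γ : ℝ) < N := by
    rw [pow_succ] at he
    linarith
  exact_mod_cast this
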